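/- Let d ≥ 1, let c ≥ 1, and let z_1, …, z_n ∈ ℝ^d satisfy ‖z_i‖₂ ≤ 1 for all i. For k = 1, …, n define the Gram matrix A_k = c·I_d + Σ_{i<k} z_i z_iᵀ. Then Σ_{i=1}^n √(z_iᵀ A_i⁻¹ z_i) ≤ √(2 d n·log(c + n/d)) + √(2 n·log(c)). -/

import Mathlib

open Matrix in
lemma ep_psd {d : ℕ} (z : ℕ → Fin d → ℝ) (k : ℕ) :
    (∑ i ∈ Finset.range k, vecMulVec (z i) (z i)).PosSemidef := by
  apply Matrix.posSemidef_sum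
  intro i _
  simpa using Matrix.posSemidef_vecMulVec_self_star (z i)

open Matrix in
lemma ep_pd {d : ℕ} (c : ℝ) (hc : 1 ≤ c) (z : ℕ → Fin d → ℝ) (k : ℕ) :
    (c • (1 : Matrix (Fin d) (Fin d) ℝ) +
      ∑ i ∈ Finset.range k, vecMulVec (z i) (z i)).PosDef :=
  (Matrix.PosDef.one.smul (by linarith : 0 < c)).add_posSemidef (ep_psd z k)

open Matrix in
lemma ep_w_le {d : ℕ} (c : ℝ) (hc : 1 ≤ c) (P A : Matrix (Fin d) (Fin d) ℝ)
    (hP : P.PosSemidef) (hA : A = c • 1 + P) (hpd : A.PosDef) (z : Fin d → ℝ)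
    (hz : ∑ j, z j ^ 2 ≤ 1) : z ⬝ᵥ (A⁻¹ *ᵥ z) ≤ 1 := by
  set y := A⁻¹ *ᵥ z with hy
  have hAy : A *ᵥ y = z := by
    rw [hy, mulVec_mulVec, Matrix.mul_nonsing_inv _ hpd.det_pos.ne'.isUnit, one_mulVec]
  have h1 : y ⬝ᵥ (A *ᵥ y) = c * (y ⬝ᵥ y) + y ⬝ᵥ (P *ᵥ y) := by
    rw [hA, add_mulVec, dotProduct_add, smul_mulVec, one_mulVec, dotProduct_smul, smul_eq_mul]
  have h2 : 0 ≤ y ⬝ᵥ (P *ᵥ y) := by simpa using hP.dotProduct_mulVec_nonneg y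
  rw [hAy, dotProduct_comm] at h1
  have h3 : (z ⬝ᵥ y) ^ 2 ≤ (∑ j, z j ^ 2) * ∑ j, y j ^ 2 :=
    Finset.sum_mul_sq_le_sq_mul_sq _ _ _
  have h4 : y ⬝ᵥ y = ∑ j, y j ^ 2 := by simp [dotProduct, sq]
  have h5 : 0 ≤ ∑ j, y j ^ 2 := Finset.sum_nonneg fun _ _ => sq_nonneg _
  rw [h4] at h1
  nlinarith

open Matrix in
lemma ep_logdet {d : ℕ} (A : Matrix (Fin d) (Fin d) ℝ) (hpd : A.PosDef) (m : ℝ) (hm : 0 < m)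
    (ht : A.trace ≤ d * m) : Real.log A.det ≤ d * Real.log m := by
  have hd := hpd.isHermitian.det_eq_prod_eigenvalues
  have htr := hpd.isHermitian.trace_eq_sum_eigenvalues
  simp only [RCLike.ofReal_real_eq_id, id] at hd htr
  rw [hd, Real.log_prod (fun i _ => (hpd.eigenvalues_pos i).ne')]
  have key : ∀ i ∈ Finset.univ, Real.log (hpd.isHermitian.eigenvalues i) ≤
      Real.log m + (hpd.isHermitian.eigenvalues i / m - 1) := by
    intro i _
    have hp := hpd.eigenvalues_pos i
    have := Real.log_le_sub_one_of_pos (div_pos hp hm)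
    rw [Real.log_div hp.ne' hm.ne'] at this
    linarith
  refine (Finset.sum_le_sum key).trans ?_
  rw [Finset.sum_add_distrib, Finset.sum_sub_distrib, ← Finset.sum_div, ← htr]
  have : A.trace / m ≤ d := by rwa [div_le_iff₀ hm]
  simp
  linarith

open Matrix in
/-- **Elliptical potential lemma (square-root version).** For vectors `z₁,…,zₙ ∈ ℝ^d` with
`‖zᵢ‖₂ ≤ 1` and Gram matrices `Aₖ = c·I + ∑_{i<k} zᵢzᵢᵀ` (with `c ≥ 1`, `d ≥ 1`),
`∑_{i=1}^n ‖zᵢ‖_{Aᵢ⁻¹} ≤ √(2dn·log(c + n/d)) + √(2n·log c)`. -/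
theorem elliptical_potential_sqrt
    (d : ℕ) (hd : 1 ≤ d) (c : ℝ) (hc : 1 ≤ c) (n : ℕ)
    (z : ℕ → Fin d → ℝ)
    (hz : ∀ i < n, Real.sqrt (∑ j, z i j ^ 2) ≤ 1)
    (A : ℕ → Matrix (Fin d) (Fin d) ℝ)
    (hA : ∀ k, A k = c • (1 : Matrix (Fin d) (Fin d) ℝ) +
      ∑ i ∈ Finset.range k, vecMulVec (z i) (z i)) :
    ∑ i ∈ Finset.range n, Real.sqrt (z i ⬝ᵥ ((A i)⁻¹ *ᵥ z i))
      ≤ Real.sqrt (2 * d * n * Real.log (c + n / d)) + Real.sqrt (2 * n * Real.log c) := by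
  have hpd : ∀ k, (A k).PosDef := fun k => by rw [hA]; exact ep_pd c hc z k
  have hz' : ∀ i < n, ∑ j, z i j ^ 2 ≤ 1 := fun i hi => by
    simpa using (Real.sqrt_le_iff.1 (hz i hi)).2
  have hw0 : ∀ i, 0 ≤ z i ⬝ᵥ ((A i)⁻¹ *ᵥ z i) := fun i => by
    simpa using (hpd i).inv.posSemidef.dotProduct_mulVec_nonneg (z i)
  have hdet : ∀ i, (A (i+1)).det = (A i).det * (1 + z i ⬝ᵥ ((A i)⁻¹ *ᵥ z i)) := fun i => by
    have h : A (i+1) = A i + replicateCol Unit (z i) * replicateRow Unit (z i) := by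
      rw [hA, hA, Finset.sum_range_succ, ← add_assoc, vecMulVec_eq Unit]
    rw [h, det_add_replicateCol_mul_replicateRow (hpd i).det_pos.ne'.isUnit]
    congr 1
    rw [Matrix.mul_assoc, ← replicateCol_mulVec]
    simp [Matrix.det_unique, Matrix.mul_apply, dotProduct]
  have hstep : ∀ i ∈ Finset.range n, z i ⬝ᵥ ((A i)⁻¹ *ᵥ z i) ≤
      2 * (Real.log (A (i+1)).det - Real.log (A i).det) := by
    intro i hi
    have h0 := hw0 i
    have h1 := ep_w_le c hc _ (A i) (ep_psd z i) (hA i) (hpd i) (z i)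
      (hz' i (Finset.mem_range.1 hi))
    rw [hdet, Real.log_mul (hpd i).det_pos.ne' (by linarith)]
    set w := z i ⬝ᵥ ((A i)⁻¹ *ᵥ z i)
    have h2 := Real.le_log_one_add_of_nonneg h0
    have h3 : w / 2 ≤ 2 * w / (w + 2) := by
      rw [div_le_div_iff₀ (by norm_num) (by linarith)]
      nlinarith
    linarith
  have hdr : (0:ℝ) < d := by exact_mod_cast hd
  have hm : 0 < c + n / d := by positivity
  have htr : (A n).trace ≤ d * (c + n / d) := by
    rw [hA, trace_add, trace_smul, trace_one, trace_sum, mul_add, mul_div_cancel₀ _ hdr.ne']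
    have : ∑ i ∈ Finset.range n, (vecMulVec (z i) (z i)).trace ≤ ∑ i ∈ Finset.range n, (1:ℝ) := by
      refine Finset.sum_le_sum fun i hi => ?_
      rw [trace_vecMulVec]
      simpa [dotProduct, sq] using hz' i (Finset.mem_range.1 hi)
    simp at this ⊢
    linarith
  have hlog := ep_logdet (A n) (hpd n) _ hm htr
  have hA0 : 0 ≤ Real.log (A 0).det := by
    apply Real.log_nonneg
    rw [hA]
    simpa [det_smul] using one_le_pow₀ hc
  have hsum : ∑ i ∈ Finset.range n, z i ⬝ᵥ ((A i)⁻¹ *ᵥ z i) ≤ 2 * (d * Real.log (c + n / d)) := by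
    refine (Finset.sum_le_sum hstep).trans ?_
    rw [← Finset.mul_sum, Finset.sum_range_sub (fun i => Real.log (A i).det)]
    linarith
  refine le_trans ?_ (le_add_of_nonneg_right (Real.sqrt_nonneg _))
  apply Real.le_sqrt_of_sq_le
  have hcs := sq_sum_le_card_mul_sum_sq (s := Finset.range n)
    (f := fun i => Real.sqrt (z i ⬝ᵥ ((A i)⁻¹ *ᵥ z i)))
  simp only [Real.sq_sqrt (hw0 _), Finset.card_range] at hcs
  refine hcs.trans ((mul_le_mul_of_nonneg_left hsum (Nat.cast_nonneg n)).trans_eq ?_)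
  ring
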